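/- Let M ∈ ℝ^{n×d} be a matrix all of whose singular values lie in the interval [1−ε, 1+ε] for some ε ∈ (0, 0.1], let b ∈ ℝⁿ, and let z* satisfy the normal equations MᵀMz* = Mᵀb. Consider the iteration z_{t+1} = z_t − Mᵀ(Mz_t − b). Then for every t, ‖M(z_{t+1} − z*)‖₂ ≤ 3ε · ‖M(z_t − z*)‖₂. -/

import Mathlib

open Matrix
open scoped BigOperators

/-- The Euclidean (`ℓ₂`) norm of a vector in `ℝ^n`. -/
noncomputable def vnorm {n : ℕ} (v : Fin n → ℝ) : ℝ :=
  Real.sqrt (∑ i, v i ^ 2)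

/-- The minimum singular value `σ_min(A) = min_{‖x‖₂ = 1} ‖Ax‖₂`. -/
noncomputable def sigmaMin {n d : ℕ} (A : Matrix (Fin n) (Fin d) ℝ) : ℝ :=
  sInf {c : ℝ | ∃ x : Fin d → ℝ, vnorm x = 1 ∧ c = vnorm (A.mulVec x)}

/-- The maximum singular value (spectral / operator norm)
`σ_max(A) = ‖A‖ = max_{‖x‖₂ = 1} ‖Ax‖₂`. -/
noncomputable def sigmaMax {n d : ℕ} (A : Matrix (Fin n) (Fin d) ℝ) : ℝ :=
  sSup {c : ℝ | ∃ x : Fin d → ℝ, vnorm x = 1 ∧ c = vnorm (A.mulVec x)}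

/-- The condition number `κ(A) = σ_max(A) / σ_min(A)`. -/
noncomputable def kappa {n d : ℕ} (A : Matrix (Fin n) (Fin d) ℝ) : ℝ :=
  sigmaMax A / sigmaMin A

/-! Put `y = A (z t - zstar)`. The iteration replaces `y` by `(1 - A A†) y`, and `1 - A A†`
restricts to a symmetric operator on the range of `A`. Cauchy-Schwarz transfers the near-isometry
of `A` to `A†` on that range, so the numerical range of the restriction lies in `[-η, η]` and hence
its norm is at most `η`. Working on the range of `A` rather than with `1 - A† A` avoids paying the
condition number of `A` for the passage between `‖A u‖` and `‖u‖`. -/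

open RCLike
open scoped InnerProduct InnerProductSpace

theorem abs_norm_map_sq_sub_norm_sq_le {𝕜 E F : Type*} [RCLike 𝕜]
    [NormedAddCommGroup E] [NormedSpace 𝕜 E] [SeminormedAddCommGroup F] [NormedSpace 𝕜 F]
    {A : E →ₗ[𝕜] F} {η : ℝ} (hA : ∀ x, ‖x‖ = 1 → |‖A x‖ ^ 2 - 1| ≤ η) (x : E) :
    |‖A x‖ ^ 2 - ‖x‖ ^ 2| ≤ η * ‖x‖ ^ 2 := by
  obtain rfl | hx := eq_or_ne x 0
  · simp
  have hunit := hA _ (norm_smul_inv_norm (𝕜 := 𝕜) hx)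
  have hnorm : ‖x‖ ≠ 0 := norm_ne_zero_iff.2 hx
  calc |‖A x‖ ^ 2 - ‖x‖ ^ 2|
      = |‖A ((‖x‖⁻¹ : 𝕜) • x)‖ ^ 2 - 1| * ‖x‖ ^ 2 := by
        rw [← abs_sq ‖x‖, ← abs_mul, abs_sq, map_smul, norm_smul, norm_inv, norm_ofReal, abs_norm]
        field_simp
    _ ≤ η * ‖x‖ ^ 2 := by gcongr

section InnerProductSpace

variable {𝕜 E F : Type*} [RCLike 𝕜] [NormedAddCommGroup E] [InnerProductSpace 𝕜 E]
  [NormedAddCommGroup F] [InnerProductSpace 𝕜 F] {η : ℝ}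

theorem norm_map_le_of_abs_re_inner_le {T : E →L[𝕜] E} (hT : (T : E →ₗ[𝕜] E).IsSymmetric)
    (hη : ∀ x, |re ⟪T x, x⟫_𝕜| ≤ η * ‖x‖ ^ 2) (x : E) : ‖T x‖ ≤ η * ‖x‖ := by
  obtain rfl | hx := eq_or_ne x 0
  · simp
  have η_nonneg : 0 ≤ η :=
    nonneg_of_mul_nonneg_left ((abs_nonneg _).trans (hη x)) (by positivity)
  refine T.le_of_opNorm_le ?_ x
  rw [T.norm_eq_iSup_rayleighQuotient hT]
  refine ciSup_le fun y => ?_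
  rw [abs_div, abs_sq]
  exact div_le_of_le_mul₀ (by positivity) η_nonneg (hη y)

variable [CompleteSpace E] [CompleteSpace F] {A : E →L[𝕜] F}

theorem norm_map_sq_le_norm_adjoint_map_mul_norm (A : E →L[𝕜] F) (x : E) :
    ‖A x‖ ^ 2 ≤ ‖(A†) (A x)‖ * ‖x‖ :=
  (A.apply_norm_sq_eq_inner_adjoint_left x).trans_le (re_inner_le_norm _ _)

theorem mul_norm_map_sq_le_norm_adjoint_map_sq {c : ℝ}
    (hA : ∀ x, c * ‖x‖ ^ 2 ≤ ‖A x‖ ^ 2) (x : E) : c * ‖A x‖ ^ 2 ≤ ‖(A†) (A x)‖ ^ 2 := by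
  obtain hc | hc := le_total c 0
  · exact (mul_nonpos_of_nonpos_of_nonneg hc (sq_nonneg _)).trans (sq_nonneg _)
  obtain hAx | hAx := eq_or_ne (A x) 0
  · simp [hAx]
  refine le_of_mul_le_mul_right ?_ (show 0 < ‖A x‖ ^ 2 by positivity)
  calc c * ‖A x‖ ^ 2 * ‖A x‖ ^ 2
      = c * (‖A x‖ ^ 2) ^ 2 := by ring
    _ ≤ c * (‖(A†) (A x)‖ * ‖x‖) ^ 2 := by
        gcongr
        exact norm_map_sq_le_norm_adjoint_map_mul_norm A x
    _ = ‖(A†) (A x)‖ ^ 2 * (c * ‖x‖ ^ 2) := by ring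
    _ ≤ ‖(A†) (A x)‖ ^ 2 * ‖A x‖ ^ 2 := by gcongr; exact hA x

theorem norm_adjoint_sq_le_mul_norm_sq {C : ℝ} (hC : 0 ≤ C)
    (hA : ∀ x, ‖A x‖ ^ 2 ≤ C * ‖x‖ ^ 2) (y : F) : ‖(A†) y‖ ^ 2 ≤ C * ‖y‖ ^ 2 := by
  have hnorm : ‖A‖ ≤ √C := A.opNorm_le_bound (Real.sqrt_nonneg C) fun x => by
    simpa [hC] using Real.le_sqrt_of_sq_le (hA x)
  calc ‖(A†) y‖ ^ 2 ≤ (√C * ‖y‖) ^ 2 := by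
        gcongr
        exact (A†).le_of_opNorm_le (by simpa using hnorm) y
    _ = C * ‖y‖ ^ 2 := by rw [mul_pow, Real.sq_sqrt hC]

theorem abs_norm_adjoint_map_sq_sub_norm_map_sq_le
    (hA : ∀ x, |‖A x‖ ^ 2 - ‖x‖ ^ 2| ≤ η * ‖x‖ ^ 2) (x : E) :
    |‖(A†) (A x)‖ ^ 2 - ‖A x‖ ^ 2| ≤ η * ‖A x‖ ^ 2 := by
  obtain rfl | hx := eq_or_ne x 0
  · simp
  have η_nonneg : 0 ≤ η :=
    nonneg_of_mul_nonneg_left ((abs_nonneg _).trans (hA x)) (by positivity)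
  have hlower : (1 - η) * ‖A x‖ ^ 2 ≤ ‖(A†) (A x)‖ ^ 2 :=
    mul_norm_map_sq_le_norm_adjoint_map_sq (fun u => by linarith [(abs_le.1 (hA u)).1]) x
  have hupper : ‖(A†) (A x)‖ ^ 2 ≤ (1 + η) * ‖A x‖ ^ 2 :=
    norm_adjoint_sq_le_mul_norm_sq (by positivity)
      (fun u => by linarith [(abs_le.1 (hA u)).2]) (A x)
  exact abs_le.2 ⟨by linarith, by linarith⟩

theorem re_inner_self_sub_map_adjoint (A : E →L[𝕜] F) (y : F) :
    re ⟪y - A ((A†) y), y⟫_𝕜 = ‖y‖ ^ 2 - ‖(A†) y‖ ^ 2 := by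
  rw [inner_sub_left, ← A.adjoint_inner_right, map_sub, inner_self_eq_norm_sq,
    inner_self_eq_norm_sq]

theorem norm_map_sub_adjoint_map_le
    (hA : ∀ x, |‖A x‖ ^ 2 - ‖x‖ ^ 2| ≤ η * ‖x‖ ^ 2) (u : E) :
    ‖A (u - (A†) (A u))‖ ≤ η * ‖A u‖ := by
  let H : F →L[𝕜] F := 1 - A ∘L A†
  have hH_mapsTo : Set.MapsTo H A.range A.range := by
    rintro _ ⟨x, rfl⟩
    exact ⟨x - (A†) (A x), by simp [H]⟩
  have hH_symm : (H : F →ₗ[𝕜] F).IsSymmetric := fun x y => by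
    simp [H, inner_sub_left, inner_sub_right, ← A.adjoint_inner_right, ← A.adjoint_inner_left]
  have hH_re_inner (y : A.range) : |re ⟪H.restrict hH_mapsTo y, y⟫_𝕜| ≤ η * ‖y‖ ^ 2 := by
    obtain ⟨_, x, rfl⟩ := y
    have hx := abs_norm_adjoint_map_sq_sub_norm_map_sq_le hA x
    rw [abs_sub_comm, ← re_inner_self_sub_map_adjoint] at hx
    exact hx
  rw [map_sub]
  exact norm_map_le_of_abs_re_inner_le (hH_symm.restrict_invariant hH_mapsTo) hH_re_inner
    ⟨A u, u, rfl⟩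

theorem gradient_descent_near_isometry_general
    (hA : ∀ x, ‖x‖ = 1 → |‖A x‖ ^ 2 - 1| ≤ η) {b : F} {zstar : E}
    (hstar : (A†) (A zstar) = (A†) b) {z : ℕ → E}
    (hz : ∀ t, z (t + 1) = z t - (A†) (A (z t) - b)) (t : ℕ) :
    ‖A (z (t + 1) - zstar)‖ ≤ η * ‖A (z t - zstar)‖ := by
  have herror : z (t + 1) - zstar = (z t - zstar) - (A†) (A (z t - zstar)) := by
    rw [hz, map_sub, map_sub, map_sub, hstar]
    abel
  rw [herror]
  exact norm_map_sub_adjoint_map_le (abs_norm_map_sq_sub_norm_sq_le (A := (A : E →ₗ[𝕜] F)) hA) _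

end InnerProductSpace

open WithLp (toLp)

theorem vnorm_eq_norm_toLp {n : ℕ} (v : Fin n → ℝ) : vnorm v = ‖toLp 2 v‖ := by
  simp [vnorm, EuclideanSpace.norm_eq]

theorem adjoint_toEuclideanLin_toContinuousLinearMap {𝕜 m n : Type*} [RCLike 𝕜]
    [Fintype m] [DecidableEq m] [Fintype n] [DecidableEq n] (M : Matrix m n 𝕜) :
    M.toEuclideanLin.toContinuousLinearMap† = Mᴴ.toEuclideanLin.toContinuousLinearMap := by
  rw [← LinearMap.adjoint_toContinuousLinearMap, ← toEuclideanLin_conjTranspose_eq_adjoint]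

theorem abs_sq_sub_one_le_three_mul {ε σ : ℝ} (hε : ε ∈ Set.Icc 0 1)
    (hσ : σ ∈ Set.Icc (1 - ε) (1 + ε)) : |σ ^ 2 - 1| ≤ 3 * ε := by
  obtain ⟨hε₀, hε₁⟩ := hε
  obtain ⟨hσ_lower, hσ_upper⟩ := hσ
  exact abs_le.2 ⟨by nlinarith, by nlinarith⟩

/-- Gradient descent with a nearly-isometric matrix: if every singular
value of `M` lies in `[1-ε, 1+ε]` with `ε ∈ (0, 0.1]` (equivalently
`1-ε ≤ ‖Mx‖₂ ≤ 1+ε` for all unit vectors `x`), `z*` satisfies the normal equations, and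
`z_{t+1} = z_t - Mᵀ(Mz_t - b)`, then the error contracts by a factor `3ε` each step. -/
theorem gradient_descent_near_isometry {n d : ℕ} (M : Matrix (Fin n) (Fin d) ℝ)
    (ε : ℝ) (hε : ε ∈ Set.Ioc (0 : ℝ) 0.1)
    (hM : ∀ x : Fin d → ℝ, vnorm x = 1 →
      1 - ε ≤ vnorm (M.mulVec x) ∧ vnorm (M.mulVec x) ≤ 1 + ε)
    (b : Fin n → ℝ) (zstar : Fin d → ℝ)
    (hstar : (Mᵀ * M).mulVec zstar = Mᵀ.mulVec b)
    (zseq : ℕ → Fin d → ℝ)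
    (hiter : ∀ t : ℕ, zseq (t + 1) = zseq t - Mᵀ.mulVec (M.mulVec (zseq t) - b)) :
    ∀ t : ℕ, vnorm (M.mulVec (zseq (t + 1) - zstar))
      ≤ 3 * ε * vnorm (M.mulVec (zseq t - zstar)) := by
  simp only [vnorm_eq_norm_toLp] at hM ⊢
  have hε' : ε ∈ Set.Icc 0 1 := ⟨hε.1.le, hε.2.trans (by norm_num)⟩
  exact gradient_descent_near_isometry_general (A := M.toEuclideanLin.toContinuousLinearMap)
    (b := toLp 2 b) (zstar := toLp 2 zstar) (z := fun t => toLp 2 (zseq t))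
    (fun x hx => abs_sq_sub_one_le_three_mul hε' (hM x hx))
    (by simp [adjoint_toEuclideanLin_toContinuousLinearMap, ← hstar])
    (fun t => by simp [adjoint_toEuclideanLin_toContinuousLinearMap, hiter, mulVec_sub])
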